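/- Let k > 0, z_T < 0, and let μ : [z_T, 0] → ℝ be continuous with μ(z_T) = k and μ(z) < k for z ∈ (z_T, 0]. Define φ(z) = ∫_{z_T}^z √(k² − μ(z')²) dz' for z ∈ [z_T, 0]. Assume moreover that z ↦ μ(z)² is continuously differentiable on a neighborhood of z_T with γ := −(d/dz)[μ²](z_T) > 0. Then the improper integrals ∫_{z_T}^z (k² − μ(z')²)^{−1/2} dz' converge for z ∈ (z_T, 0] close to z_T, and lim_{z → z_T⁺} (3φ(z)/2)^{−1/3} · ∫_{z_T}^z (k² − μ(z')²)^{−1/2} dz' = 2 γ^{−2/3}. -/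

import Mathlib

open MeasureTheory Real Filter

/-!
Write `q = k² - μ²`, so that `q z ∼ γ (z - z_T)` as `z → z_T⁺`. Raising this to a power `p > -1` and
integrating gives `∫_{z_T}^z q ^ p ∼ γ ^ p / (p + 1) * (z - z_T) ^ (p + 1)`. With `p = 1/2` it reads
`3 φ(z) / 2 ∼ γ ^ (1/2) (z - z_T) ^ (3/2)`, and with `p = -1/2` it reads
`∫_{z_T}^z q ^ (-1/2) ∼ 2 γ ^ (-1/2) (z - z_T) ^ (1/2)`; in the product of the power `-1/3` of the
former with the latter, the powers of `z - z_T` cancel.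
-/

open Set Asymptotics
open scoped Topology

section IntegralAsymptotics

variable {E F : Type*} [NormedAddCommGroup E] [NormedAddCommGroup F]
  {ν : Measure ℝ} {a : ℝ}

lemma eventually_integrableOn_Ioc_of_integrableAtFilter {f : ℝ → E}
    (hf : IntegrableAtFilter f (𝓝[>] a) ν) : ∀ᶠ z in 𝓝[>] a, IntegrableOn f (Ioc a z) ν := by
  obtain ⟨s, hs, hfs⟩ := hf
  obtain ⟨b, hab, hbs⟩ := mem_nhdsGT_iff_exists_Ioc_subset.1 hs
  filter_upwards [Ioc_mem_nhdsGT hab] with z hz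
  exact hfs.mono_set ((Ioc_subset_Ioc_right hz.2).trans hbs)

lemma eventually_intervalIntegrable_of_integrableAtFilter {f : ℝ → E}
    (hf : IntegrableAtFilter f (𝓝[>] a) ν) : ∀ᶠ z in 𝓝[>] a, IntervalIntegrable f ν a z := by
  filter_upwards [eventually_integrableOn_Ioc_of_integrableAtFilter hf, self_mem_nhdsWithin]
    with z hz haz
  exact (intervalIntegrable_iff_integrableOn_Ioc_of_le (le_of_lt haz)).2 hz

lemma isLittleO_intervalIntegral_nhdsGT [NormedSpace ℝ E] {f : ℝ → E} {g : ℝ → F}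
    (hfg : f =o[𝓝[>] a] g) (hg : IntegrableAtFilter g (𝓝[>] a) ν) :
    (fun z => ∫ x in a..z, f x ∂ν) =o[𝓝[>] a] fun z => ∫ x in a..z, ‖g x‖ ∂ν := by
  refine isLittleO_iff.2 fun ε hε => ?_
  obtain ⟨b, hab, hb⟩ := mem_nhdsGT_iff_exists_Ioc_subset.1 (hfg.bound hε)
  filter_upwards [eventually_intervalIntegrable_of_integrableAtFilter hg, Ioc_mem_nhdsGT hab]
    with z hgz hz
  calc ‖∫ x in a..z, f x ∂ν‖ ≤ ∫ x in a..z, ε * ‖g x‖ ∂ν :=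
        intervalIntegral.norm_integral_le_of_norm_le hz.1.le
          (ae_of_all _ fun x hx => hb ⟨hx.1, hx.2.trans hz.2⟩) (hgz.norm.const_mul ε)
    _ = ε * ∫ x in a..z, ‖g x‖ ∂ν := intervalIntegral.integral_const_mul ..
    _ ≤ ε * ‖∫ x in a..z, ‖g x‖ ∂ν‖ := by gcongr; exact le_norm_self _

lemma isEquivalent_intervalIntegral_nhdsGT {f g : ℝ → ℝ} (hfg : f ~[𝓝[>] a] g)
    (hf : StronglyMeasurableAtFilter f (𝓝[>] a) ν) (hg : IntegrableAtFilter g (𝓝[>] a) ν)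
    (hg0 : ∀ᶠ x in 𝓝[>] a, 0 ≤ g x) :
    (fun z => ∫ x in a..z, f x ∂ν) ~[𝓝[>] a] fun z => ∫ x in a..z, g x ∂ν := by
  obtain ⟨b, hab, hb⟩ := mem_nhdsGT_iff_exists_Ioc_subset.1 hg0
  refine (isLittleO_intervalIntegral_nhdsGT hfg hg).congr' ?_ ?_
  · filter_upwards [eventually_intervalIntegrable_of_integrableAtFilter hg,
      eventually_intervalIntegrable_of_integrableAtFilter (hfg.isBigO.integrableAtFilter hf hg)]
      with z hgz hfz
    exact intervalIntegral.integral_sub hfz hgz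
  · filter_upwards [Ioc_mem_nhdsGT hab] with z hz
    refine intervalIntegral.integral_congr_ae (ae_of_all _ fun x hx => norm_of_nonneg (hb ?_))
    rw [uIoc_of_le hz.1.le] at hx
    exact ⟨hx.1, hx.2.trans hz.2⟩

end IntegralAsymptotics

lemma intervalIntegrable_sub_rpow {p : ℝ} (hp : -1 < p) (a z : ℝ) :
    IntervalIntegrable (fun x => (x - a) ^ p) volume a z := by
  simpa using
    (intervalIntegral.intervalIntegrable_rpow' (a := 0) (b := z - a) hp).comp_sub_right a

lemma integral_sub_rpow {p : ℝ} (hp : -1 < p) (a z : ℝ) :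
    ∫ x in a..z, (x - a) ^ p = (z - a) ^ (p + 1) / (p + 1) := by
  rw [intervalIntegral.integral_comp_sub_right (fun x => x ^ p), integral_rpow (Or.inl hp),
    sub_self, zero_rpow (by linarith), sub_zero]

lemma isEquivalent_rpow_of_eventually_nonneg {α : Type*} {l : Filter α} {u v : α → ℝ}
    (hv : ∀ᶠ x in l, 0 ≤ v x) (huv : u ~[l] v) (p : ℝ) :
    (fun x => u x ^ p) ~[l] fun x => v x ^ p := by
  have habs : v =ᶠ[l] fun x => |v x| := hv.mono fun x hx => (abs_of_nonneg hx).symm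
  have hpow : (fun x => u x ^ p) ~[l] fun x => |v x| ^ p :=
    (huv.congr_right habs).rpow fun x => abs_nonneg (v x)
  exact hpow.congr_right (habs.symm.fun_comp (· ^ p))

lemma stronglyMeasurableAtFilter_rpow_const {α : Type*} [MeasurableSpace α] {l : Filter α}
    {ν : Measure α} {q : α → ℝ} (hq : StronglyMeasurableAtFilter q l ν) (p : ℝ) :
    StronglyMeasurableAtFilter (fun x => q x ^ p) l ν := by
  obtain ⟨s, hs, hqs⟩ := hq
  exact ⟨s, hs, (hqs.aemeasurable.pow_const p).aestronglyMeasurable⟩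

lemma isEquivalent_mul_sub_of_hasDerivWithinAt {q : ℝ → ℝ} {s : Set ℝ} {a c : ℝ} (hc : c ≠ 0)
    (hqa : q a = 0) (hq : HasDerivWithinAt q c s a) :
    q ~[𝓝[s] a] fun x => c * (x - a) := by
  have h := hasDerivWithinAt_iff_isLittleO.1 hq
  simp only [hqa, sub_zero, smul_eq_mul] at h
  exact (h.const_mul_right hc).congr_left fun x => by rw [Pi.sub_apply, mul_comm c]

section SimpleZero

variable {q : ℝ → ℝ} {a c p : ℝ}

lemma isEquivalent_rpow_of_isEquivalent_mul_sub (hc : 0 ≤ c)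
    (hq : q ~[𝓝[>] a] fun x => c * (x - a)) (p : ℝ) :
    (fun x => q x ^ p) ~[𝓝[>] a] fun x => c ^ p * (x - a) ^ p := by
  have hsub : ∀ᶠ x in 𝓝[>] a, 0 ≤ x - a :=
    eventually_mem_nhdsWithin.mono fun x hx => sub_nonneg.2 (le_of_lt hx)
  exact (isEquivalent_rpow_of_eventually_nonneg
    (hsub.mono fun x hx => mul_nonneg hc hx) hq p).congr_right
    (hsub.mono fun x hx => mul_rpow hc hx)

lemma integrableAtFilter_mul_sub_rpow (hp : -1 < p) (a C : ℝ) :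
    IntegrableAtFilter (fun x => C * (x - a) ^ p) (𝓝[>] a) :=
  ⟨Ioc a (a + 1), Ioc_mem_nhdsGT (lt_add_one a),
    ((intervalIntegrable_sub_rpow hp a _).const_mul C).1⟩

lemma integrableAtFilter_rpow_of_isEquivalent_mul_sub (hc : 0 ≤ c) (hp : -1 < p)
    (hq : q ~[𝓝[>] a] fun x => c * (x - a)) (hmeas : StronglyMeasurableAtFilter q (𝓝[>] a)) :
    IntegrableAtFilter (fun x => q x ^ p) (𝓝[>] a) :=
  (isEquivalent_rpow_of_isEquivalent_mul_sub hc hq p).isBigO.integrableAtFilter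
    (stronglyMeasurableAtFilter_rpow_const hmeas p) (integrableAtFilter_mul_sub_rpow hp a _)

lemma isEquivalent_integral_rpow_of_isEquivalent_mul_sub (hc : 0 ≤ c) (hp : -1 < p)
    (hq : q ~[𝓝[>] a] fun x => c * (x - a)) (hmeas : StronglyMeasurableAtFilter q (𝓝[>] a)) :
    (fun z => ∫ x in a..z, q x ^ p) ~[𝓝[>] a]
      fun z => c ^ p / (p + 1) * (z - a) ^ (p + 1) := by
  have hnonneg : ∀ᶠ x in 𝓝[>] a, 0 ≤ c ^ p * (x - a) ^ p :=
    eventually_mem_nhdsWithin.mono fun x hx =>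
      mul_nonneg (rpow_nonneg hc p) (rpow_nonneg (sub_nonneg.2 (le_of_lt hx)) p)
  refine (isEquivalent_intervalIntegral_nhdsGT
    (isEquivalent_rpow_of_isEquivalent_mul_sub hc hq p)
    (stronglyMeasurableAtFilter_rpow_const hmeas p)
    (integrableAtFilter_mul_sub_rpow hp a _) hnonneg).congr_right (.of_eq (funext fun z => ?_))
  rw [intervalIntegral.integral_const_mul, integral_sub_rpow hp, mul_div_left_comm, mul_comm]

lemma isEquivalent_three_mul_integral_sqrt_div_two (hc : 0 ≤ c)
    (hq : q ~[𝓝[>] a] fun x => c * (x - a)) (hmeas : StronglyMeasurableAtFilter q (𝓝[>] a)) :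
    (fun z => 3 * (∫ x in a..z, √(q x)) / 2) ~[𝓝[>] a]
      fun z => c ^ ((1 : ℝ) / 2) * (z - a) ^ ((3 : ℝ) / 2) := by
  have h := (IsEquivalent.refl (u := fun _ : ℝ => (3 : ℝ) / 2)).mul
    (isEquivalent_integral_rpow_of_isEquivalent_mul_sub (p := 1 / 2) hc (by norm_num) hq hmeas)
  refine (h.congr_left (.of_eq (funext fun z => ?_))).congr_right (.of_eq (funext fun z => ?_))
  · simp only [Pi.mul_apply, sqrt_eq_rpow]
    ring
  · rw [Pi.mul_apply, show (1 : ℝ) / 2 + 1 = 3 / 2 by norm_num]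
    ring

lemma isEquivalent_integral_rpow_neg_half (hc : 0 ≤ c)
    (hq : q ~[𝓝[>] a] fun x => c * (x - a)) (hmeas : StronglyMeasurableAtFilter q (𝓝[>] a)) :
    (fun z => ∫ x in a..z, q x ^ (-(1 : ℝ) / 2)) ~[𝓝[>] a]
      fun z => 2 * c ^ (-(1 : ℝ) / 2) * (z - a) ^ ((1 : ℝ) / 2) := by
  refine (isEquivalent_integral_rpow_of_isEquivalent_mul_sub hc (by norm_num) hq
    hmeas).congr_right (.of_eq (funext fun z => ?_))
  rw [show -(1 : ℝ) / 2 + 1 = 1 / 2 by norm_num]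
  ring

end SimpleZero

lemma mul_rpow_neg_third_mul_eq_two_mul_rpow {γ t : ℝ} (hγ : 0 < γ) (ht : 0 < t) :
    (γ ^ ((1 : ℝ) / 2) * t ^ ((3 : ℝ) / 2)) ^ (-(1 : ℝ) / 3) *
      (2 * γ ^ (-(1 : ℝ) / 2) * t ^ ((1 : ℝ) / 2)) = 2 * γ ^ (-(2 : ℝ) / 3) := by
  rw [mul_rpow (by positivity) (by positivity), ← rpow_mul hγ.le, ← rpow_mul ht.le]
  calc γ ^ ((1 : ℝ) / 2 * (-1 / 3)) * t ^ ((3 : ℝ) / 2 * (-1 / 3)) *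
        (2 * γ ^ (-(1 : ℝ) / 2) * t ^ ((1 : ℝ) / 2))
      = 2 * (γ ^ ((1 : ℝ) / 2 * (-1 / 3)) * γ ^ (-(1 : ℝ) / 2)) *
          (t ^ ((3 : ℝ) / 2 * (-1 / 3)) * t ^ ((1 : ℝ) / 2)) := by ring
    _ = 2 * γ ^ (-(2 : ℝ) / 3) := by
        rw [← rpow_add hγ, ← rpow_add ht]
        norm_num

theorem turning_point_phase_ratio_limit_general {q φ : ℝ → ℝ} {a γ : ℝ} (hγ : 0 < γ)
    (hqa : q a = 0) (hq : HasDerivWithinAt q γ (Ioi a) a)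
    (hmeas : StronglyMeasurableAtFilter q (𝓝[>] a))
    (hφ : ∀ᶠ z in 𝓝[>] a, φ z = ∫ x in a..z, √(q x)) :
    (∀ᶠ z in 𝓝[>] a, IntegrableOn (fun x => q x ^ (-(1 : ℝ) / 2)) (Ioc a z)) ∧
    Tendsto (fun z => (3 * φ z / 2) ^ (-(1 : ℝ) / 3) * ∫ x in a..z, q x ^ (-(1 : ℝ) / 2))
      (𝓝[>] a) (𝓝 (2 * γ ^ (-(2 : ℝ) / 3))) := by
  have hlin := isEquivalent_mul_sub_of_hasDerivWithinAt hγ.ne' hqa hq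
  refine ⟨eventually_integrableOn_Ioc_of_integrableAtFilter
    (integrableAtFilter_rpow_of_isEquivalent_mul_sub hγ.le (by norm_num) hlin hmeas), ?_⟩
  have hphase : (fun z => 3 * φ z / 2) ~[𝓝[>] a]
      fun z => γ ^ ((1 : ℝ) / 2) * (z - a) ^ ((3 : ℝ) / 2) :=
    (isEquivalent_three_mul_integral_sqrt_div_two hγ.le hlin hmeas).congr_left
      (hφ.mono fun z hz => by simp only [hz])
  have hphase_nonneg : ∀ᶠ z in 𝓝[>] a, 0 ≤ γ ^ ((1 : ℝ) / 2) * (z - a) ^ ((3 : ℝ) / 2) :=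
    eventually_mem_nhdsWithin.mono fun z hz =>
      mul_nonneg (rpow_nonneg hγ.le _) (rpow_nonneg (sub_nonneg.2 (le_of_lt hz)) _)
  have hratio := (isEquivalent_rpow_of_eventually_nonneg hphase_nonneg hphase (-(1 : ℝ) / 3)).mul
    (isEquivalent_integral_rpow_neg_half hγ.le hlin hmeas)
  refine hratio.symm.tendsto_nhds (tendsto_const_nhds.congr' ?_)
  filter_upwards [self_mem_nhdsWithin] with z hz
  exact (mul_rpow_neg_third_mul_eq_two_mul_rpow hγ (sub_pos.2 hz)).symm

/-- near a simple turning point (`γ = −(μ²)'(z_T) > 0`), the improper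
integrals `∫_{z_T}^z (k²−μ²)^{−1/2}` converge for `z > z_T` close to `z_T`, and
`(3φ(z)/2)^{−1/3} ∫_{z_T}^z (k²−μ²)^{−1/2} → 2γ^{−2/3}` as `z → z_T⁺`. -/
theorem turning_point_phase_ratio_limit
    (k zT : ℝ) (hk : 0 < k) (hzT : zT < 0)
    (μ : ℝ → ℝ) (hμc : ContinuousOn μ (Set.Icc zT 0))
    (hμT : μ zT = k) (hμlt : ∀ z ∈ Set.Ioc zT 0, μ z < k)
    (φ : ℝ → ℝ)
    (hφ : ∀ z ∈ Set.Icc zT 0, φ z = ∫ z' in zT..z, Real.sqrt (k ^ 2 - μ z' ^ 2))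
    (hμ2 : ContDiffAt ℝ 1 (fun z => μ z ^ 2) zT)
    (γ : ℝ) (hγ : γ = -deriv (fun z => μ z ^ 2) zT) (hγpos : 0 < γ) :
    (∀ᶠ z in nhdsWithin zT (Set.Ioi zT),
      IntegrableOn (fun z' => (k ^ 2 - μ z' ^ 2) ^ (-(1 : ℝ) / 2)) (Set.Ioc zT z)) ∧
    Tendsto (fun z => (3 * φ z / 2) ^ (-(1 : ℝ) / 3) *
        ∫ z' in zT..z, (k ^ 2 - μ z' ^ 2) ^ (-(1 : ℝ) / 2))
      (nhdsWithin zT (Set.Ioi zT)) (nhds (2 * γ ^ (-(2 : ℝ) / 3))) := by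
  have hcont : ContinuousOn (fun z => k ^ 2 - μ z ^ 2) (Ioc zT 0) :=
    continuousOn_const.sub ((hμc.mono Ioc_subset_Icc_self).pow 2)
  exact turning_point_phase_ratio_limit_general hγpos (by simp only [hμT, sub_self])
    (hγ ▸ ((hμ2.differentiableAt one_ne_zero).hasDerivAt.const_sub (k ^ 2)).hasDerivWithinAt)
    (nhdsWithin_Ioc_eq_nhdsGT hzT ▸
      hcont.stronglyMeasurableAtFilter_nhdsWithin measurableSet_Ioc zT)
    (eventually_of_mem (Icc_mem_nhdsGT hzT) hφ)
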